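/- arXiv:2505.10303 — 6 statements merged into one kernel-verified Lean document; each statement's English description precedes it below -/
import Mathlib

section
/- For every closed right-linear lattice (RLL) expression e, the expression e^c is complementary to e in the language model: L(e^c) = A^ω \ L(e). More generally, for an RLL expression e(X₁,…,Xₙ) with free variables X₁,…,Xₙ and arbitrary languages A₁,…,Aₙ ⊆ A^ω, L(e(A₁,…,Aₙ))^c-interpretation satisfies L(e^c(A^ω\A₁,…,A^ω\Aₙ)) = A^ω \ L(e(A₁,…,Aₙ)). -/
namespace RLLPaper

/-- Right-linear lattice (RLL) expressions over an alphabet `A`,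
with de Bruijn indices for variables. -/
inductive Expr (A : Type) : Type
  | var : ℕ → Expr A
  | act : A → Expr A → Expr A
  | plus : Expr A → Expr A → Expr A
  | inter : Expr A → Expr A → Expr A
  | mu : Expr A → Expr A
  | nu : Expr A → Expr A

namespace Expr

variable {A : Type}

/-- The expression `0 := μX X`. -/
def zero (A : Type) : Expr A := mu (var 0)

/-- The expression `⊤ := νX X`. -/
def top (A : Type) : Expr A := nu (var 0)

/-- Renaming of (free) de Bruijn variables. -/
def rename : (ℕ → ℕ) → Expr A → Expr A
  | r, var n => var (r n)
  | r, act a e => act a (rename r e)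
  | r, plus e f => plus (rename r e) (rename r f)
  | r, inter e f => inter (rename r e) (rename r f)
  | r, mu e => mu (rename (fun n => match n with | 0 => 0 | m+1 => r m + 1) e)
  | r, nu e => nu (rename (fun n => match n with | 0 => 0 | m+1 => r m + 1) e)

/-- Parallel (capture-avoiding) substitution. -/
def msubst : (ℕ → Expr A) → Expr A → Expr A
  | τ, var n => τ n
  | τ, act a e => act a (msubst τ e)
  | τ, plus e f => plus (msubst τ e) (msubst τ f)
  | τ, inter e f => inter (msubst τ e) (msubst τ f)
  | τ, mu e => mu (msubst (fun n => match n with | 0 => var 0 | m+1 => rename (· + 1) (τ m)) e)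
  | τ, nu e => nu (msubst (fun n => match n with | 0 => var 0 | m+1 => rename (· + 1) (τ m)) e)

/-- Substitution of `g` for the variable bound at de Bruijn index `0`:
`e(g)` when `e` has distinguished free variable `0`. -/
def subst0 (g : Expr A) (e : Expr A) : Expr A :=
  msubst (fun n => match n with | 0 => g | m+1 => var m) e

/-- The de Bruijn variable `n` occurs free in an expression. -/
def FreeIn : ℕ → Expr A → Prop
  | n, var m => n = m
  | n, act _ e => FreeIn n e
  | n, plus e f => FreeIn n e ∨ FreeIn n f
  | n, inter e f => FreeIn n e ∨ FreeIn n f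
  | n, mu e => FreeIn (n+1) e
  | n, nu e => FreeIn (n+1) e

/-- All free variables of the expression are `< k`. -/
def ClosedAbove : Expr A → ℕ → Prop
  | var n, k => n < k
  | act _ e, k => ClosedAbove e k
  | plus e f, k => ClosedAbove e k ∧ ClosedAbove f k
  | inter e f, k => ClosedAbove e k ∧ ClosedAbove f k
  | mu e, k => ClosedAbove e (k+1)
  | nu e, k => ClosedAbove e (k+1)

/-- An expression is closed if it has no free variables. -/
def Closed (e : Expr A) : Prop := ClosedAbove e 0

/-- A finite sum `Σ` of expressions (with `0` for the empty sum). -/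
def listSum (l : List (Expr A)) : Expr A := l.foldr plus (zero A)

/-- The syntactic complement `eᶜ` of an RLL expression:
`Xᶜ = X`, `(a·e)ᶜ = a·eᶜ + Σ_{b ≠ a} b·⊤`, `(e+f)ᶜ = eᶜ ∩ fᶜ`,
`(e∩f)ᶜ = eᶜ + fᶜ`, `(μX e)ᶜ = νX eᶜ`, `(νX e)ᶜ = μX eᶜ`. -/
noncomputable def compl [Fintype A] [DecidableEq A] : Expr A → Expr A
  | var n => var n
  | act a e => plus (act a (compl e))
      (listSum ((((Finset.univ : Finset A).erase a).toList).map (fun b => act b (top A))))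
  | plus e f => inter (compl e) (compl f)
  | inter e f => plus (compl e) (compl f)
  | mu e => nu (compl e)
  | nu e => mu (compl e)

end Expr

end RLLPaper
namespace RLLPaper

namespace Expr

variable {A : Type}

/-- The language interpretation of an RLL expression, relative to an
environment `ρ` assigning languages of ω-words to the free variables.
`μ` is interpreted as the intersection of all prefixed points, `ν` as the
union of all postfixed points (the least/greatest fixed points, by
Knaster-Tarski). -/
def Lang : Expr A → (ℕ → Set (Stream' A)) → Set (Stream' A)
  | var n, ρ => ρ n
  | act a e, ρ => Stream'.cons a '' Lang e ρ
  | plus e f, ρ => Lang e ρ ∪ Lang f ρ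
  | inter e f, ρ => Lang e ρ ∩ Lang f ρ
  | mu e, ρ => ⋂₀ {S | Lang e (fun n => match n with | 0 => S | m+1 => ρ m) ⊆ S}
  | nu e, ρ => ⋃₀ {S | S ⊆ Lang e (fun n => match n with | 0 => S | m+1 => ρ m)}

/-- The language of a (closed) RLL expression. -/
def lang (e : Expr A) : Set (Stream' A) := Lang e (fun _ => ∅)

end Expr

end RLLPaper

namespace RLLPaper

open Expr

/-!
Induction on the expression, with the environment generalised. A letter prefix is handled by the
partition of `A^ω` according to the first letter, and the binders by the De Morgan duality between
prefixed and postfixed points: complementation exchanges `{S | F S ⊆ S}` with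
`{S | S ⊆ (F Sᶜ)ᶜ}`, hence the Knaster–Tarski formulas for the least fixed point of `F` and the
greatest fixed point of `S ↦ (F Sᶜ)ᶜ`.
-/

section FixedPoints

variable {α : Type*} [CompleteBooleanAlgebra α] {f g : α → α}

theorem sSup_postfixed_eq_compl_sInf_prefixed (h : ∀ x, g xᶜ = (f x)ᶜ) :
    sSup {x | x ≤ g x} = (sInf {x | f x ≤ x})ᶜ := by
  have image_prefixed : Compl.compl '' {x | f x ≤ x} = {x | x ≤ g x} := by
    ext x
    have g_eq : g x = (f xᶜ)ᶜ := by rw [← h, compl_compl]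
    simp only [compl_involutive.image_eq_preimage_symm, Set.mem_preimage, Set.mem_ofPred_eq, g_eq,
      le_compl_comm]
  rw [compl_sInf', image_prefixed]

theorem sInf_prefixed_eq_compl_sSup_postfixed (h : ∀ x, g xᶜ = (f x)ᶜ) :
    sInf {x | g x ≤ x} = (sSup {x | x ≤ f x})ᶜ := by
  have h_symm (x : α) : f xᶜ = (g x)ᶜ := by rw [eq_compl_comm, ← h, compl_compl]
  rw [sSup_postfixed_eq_compl_sInf_prefixed h_symm, compl_compl]

end FixedPoints

section Streams

variable {α : Type*}

theorem range_cons (a : α) : Set.range (Stream'.cons a) = {s | s.head = a} := by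
  ext s
  constructor
  · rintro ⟨t, rfl⟩
    exact Stream'.head_cons a t
  · rintro rfl
    exact ⟨s.tail, s.eta⟩

theorem compl_range_cons (a : α) :
    (Set.range (Stream'.cons a))ᶜ = ⋃ b ≠ a, Set.range (Stream'.cons b) := by
  ext s
  simp [range_cons]

end Streams

section Environments

variable {α β : Type*}

/-- The environment in force under a binder: de Bruijn index `0` denotes `x`, and the indices of
the surrounding environment `ρ` are shifted up by one. -/
def extendEnv (x : α) (ρ : ℕ → α) : ℕ → α
  | 0 => x
  | n + 1 => ρ n

theorem extendEnv_map (f : α → β) (x : α) (ρ : ℕ → α) :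
    extendEnv (f x) (fun n => f (ρ n)) = fun n => f (extendEnv x ρ n) := by
  funext n
  cases n <;> rfl

theorem eqOn_extendEnv {ρ σ : ℕ → α} {k : ℕ} (x : α) (h : Set.EqOn ρ σ (Set.Iio k)) :
    Set.EqOn (extendEnv x ρ) (extendEnv x σ) (Set.Iio (k + 1))
  | 0, _ => rfl
  | _ + 1, hn => h (Nat.lt_of_succ_lt_succ hn)

end Environments

namespace Expr

variable {A : Type}

theorem Lang_mu (e : Expr A) (ρ : ℕ → Set (Stream' A)) :
    Lang (mu e) ρ = sInf {S | Lang e (extendEnv S ρ) ≤ S} :=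
  rfl

theorem Lang_nu (e : Expr A) (ρ : ℕ → Set (Stream' A)) :
    Lang (nu e) ρ = sSup {S | S ≤ Lang e (extendEnv S ρ)} :=
  rfl

theorem Lang_zero (ρ : ℕ → Set (Stream' A)) : Lang (zero A) ρ = ∅ :=
  Set.subset_empty_iff.mp (Set.sInter_subset_of_mem Set.Subset.rfl)

theorem Lang_top (ρ : ℕ → Set (Stream' A)) : Lang (top A) ρ = Set.univ :=
  Set.univ_subset_iff.mp (Set.subset_sUnion_of_mem Set.Subset.rfl)

theorem Lang_act_top (a : A) (ρ : ℕ → Set (Stream' A)) :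
    Lang (act a (top A)) ρ = Set.range (Stream'.cons a) := by
  rw [Lang, Lang_top, Set.image_univ]

theorem Lang_listSum (l : List (Expr A)) (ρ : ℕ → Set (Stream' A)) :
    Lang (listSum l) ρ = ⋃ e ∈ l, Lang e ρ := by
  induction l with
  | nil =>
    calc Lang (listSum []) ρ = ∅ := Lang_zero ρ
      _ = ⋃ f ∈ [], Lang f ρ := by simp
  | cons e l ih =>
    calc Lang (listSum (e :: l)) ρ = Lang e ρ ∪ Lang (listSum l) ρ := rfl
      _ = ⋃ f ∈ e :: l, Lang f ρ := by simp [ih, Set.iUnion_or, Set.iUnion_union_distrib]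

theorem Lang_eq_of_eqOn {e : Expr A} {k : ℕ} {ρ σ : ℕ → Set (Stream' A)} (he : ClosedAbove e k)
    (h : Set.EqOn ρ σ (Set.Iio k)) : Lang e ρ = Lang e σ := by
  induction e generalizing k ρ σ with
  | var n => exact h he
  | act a e ih => rw [Lang, Lang, ih he h]
  | plus e f ihe ihf => rw [Lang, Lang, ihe he.1 h, ihf he.2 h]
  | inter e f ihe ihf => rw [Lang, Lang, ihe he.1 h, ihf he.2 h]
  | mu e ih => simp only [Lang_mu, fun S => ih he (eqOn_extendEnv S h)]
  | nu e ih => simp only [Lang_nu, fun S => ih he (eqOn_extendEnv S h)]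

theorem Closed.Lang_eq {e : Expr A} (he : e.Closed) (ρ σ : ℕ → Set (Stream' A)) :
    Lang e ρ = Lang e σ :=
  Lang_eq_of_eqOn he fun n hn => absurd hn n.not_lt_zero

variable [Fintype A] [DecidableEq A]

theorem Lang_compl_act (a : A) (e : Expr A) (ρ : ℕ → Set (Stream' A)) :
    Lang (Expr.compl (act a e)) ρ =
      Stream'.cons a '' Lang (Expr.compl e) ρ ∪ (Set.range (Stream'.cons a))ᶜ := by
  rw [Expr.compl, Lang, Lang, Lang_listSum, compl_range_cons]
  simp [Lang_act_top]

theorem Lang_compl (e : Expr A) (ρ : ℕ → Set (Stream' A)) :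
    Lang (Expr.compl e) (fun n => (ρ n)ᶜ) = (Lang e ρ)ᶜ := by
  induction e generalizing ρ with
  | var n => rfl
  | act a e ih =>
    rw [Lang_compl_act, ih, Lang, (Stream'.cons_injective_right a).compl_image_eq]
  | plus e f ihe ihf => rw [Expr.compl, Lang, Lang, ihe, ihf, Set.compl_union]
  | inter e f ihe ihf => rw [Expr.compl, Lang, Lang, ihe, ihf, Set.compl_inter]
  | mu e ih =>
    rw [Expr.compl, Lang_nu, Lang_mu]
    exact sSup_postfixed_eq_compl_sInf_prefixed fun S => by rw [extendEnv_map, ih]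
  | nu e ih =>
    rw [Expr.compl, Lang_mu, Lang_nu]
    exact sInf_prefixed_eq_compl_sSup_postfixed fun S => by rw [extendEnv_map, ih]

end Expr

/-- For every closed RLL expression `e`, the syntactic
complement `eᶜ` is complementary to `e` in the language model:
`L(eᶜ) = A^ω \ L(e)`.  More generally, for an expression `e` with free
variables and arbitrary languages assigned to them by an environment `ρ`,
`L(eᶜ)` evaluated in the complemented environment is the set-complement of
`L(e)` evaluated in `ρ`. -/
theorem complement_correct {A : Type} [Fintype A] [DecidableEq A] :
    (∀ e : Expr A, e.Closed → lang (compl e) = (lang e)ᶜ) ∧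
    (∀ (e : Expr A) (ρ : ℕ → Set (Stream' A)),
      Lang (compl e) (fun n => (ρ n)ᶜ) = (Lang e ρ)ᶜ) := by
  refine ⟨fun e he => ?_, Lang_compl⟩
  calc lang (compl e) = Lang (compl e) (fun _ => Set.univᶜ) := by rw [lang, Set.compl_univ]
    _ = (Lang e fun _ => Set.univ)ᶜ := Lang_compl e _
    _ = (lang e)ᶜ := by rw [lang, he.Lang_eq]

end RLLPaper
end

section
/- The quantifier-free complementation schema implies the duality axioms: in the theory axiomatised by the bounded distributive lattice axioms, the letter-homomorphism axioms, the partition axioms, the least-prefixed-point axioms for μ, the greatest-postfixed-point axioms for ν, and the schema (⊤ ≤ e + e^c and e ∩ e^c ≤ 0 for all closed e), one can derive both duality schemas: if ∀X,Y (⊤ ≤ X+Y implies ⊤ ≤ e(X)+f(Y)) then ⊤ ≤ μX e(X) + νY f(Y), and if ∀X,Y (X∩Y ≤ 0 implies e(X)∩f(Y) ≤ 0) then μX e(X) ∩ νY f(Y) ≤ 0. -/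
namespace RLLPaper

open Expr

/-- Derivability in the theory axiomatised by the bounded distributive lattice
axioms, the letter-homomorphism axioms, the partition axioms, the
least-prefixed-point axioms for `μ`, the greatest-postfixed-point axioms for
`ν`, and the quantifier-free complementation schema
(`⊤ ≤ e + eᶜ` and `e ∩ eᶜ ≤ 0` for all closed `e`), in place of the μ-ν
duality schemas.  `e ≤ f` is the equation `e + f = f`. -/
inductive ProvesC {A : Type} [Fintype A] [DecidableEq A] : Expr A → Expr A → Prop
  -- equational logic
  | refl (e : Expr A) : ProvesC e e
  | symm {e f : Expr A} : ProvesC e f → ProvesC f e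
  | trans {e f g : Expr A} : ProvesC e f → ProvesC f g → ProvesC e g
  | act_congr (a : A) {e f} : ProvesC e f → ProvesC (act a e) (act a f)
  | plus_congr {e e' f f' : Expr A} :
      ProvesC e e' → ProvesC f f' → ProvesC (plus e f) (plus e' f')
  | inter_congr {e e' f f' : Expr A} :
      ProvesC e e' → ProvesC f f' → ProvesC (inter e f) (inter e' f')
  | mu_congr {e f : Expr A} : ProvesC e f → ProvesC (mu e) (mu f)
  | nu_congr {e f : Expr A} : ProvesC e f → ProvesC (nu e) (nu f)
  -- bounded distributive lattice axioms
  | plus_zero (e : Expr A) : ProvesC (plus e (zero A)) e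
  | plus_assoc (e f g : Expr A) : ProvesC (plus e (plus f g)) (plus (plus e f) g)
  | plus_comm (e f : Expr A) : ProvesC (plus e f) (plus f e)
  | plus_idem (e : Expr A) : ProvesC (plus e e) e
  | plus_absorb (e f : Expr A) : ProvesC (plus e (inter e f)) e
  | plus_distrib (e f g : Expr A) :
      ProvesC (plus e (inter f g)) (inter (plus e f) (plus e g))
  | inter_top (e : Expr A) : ProvesC (inter e (top A)) e
  | inter_assoc (e f g : Expr A) : ProvesC (inter e (inter f g)) (inter (inter e f) g)
  | inter_comm (e f : Expr A) : ProvesC (inter e f) (inter f e)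
  | inter_idem (e : Expr A) : ProvesC (inter e e) e
  | inter_absorb (e f : Expr A) : ProvesC (inter e (plus e f)) e
  | inter_distrib (e f g : Expr A) :
      ProvesC (inter e (plus f g)) (plus (inter e f) (inter e g))
  -- letter homomorphism axioms
  | act_zero (a : A) : ProvesC (act a (zero A)) (zero A)
  | act_plus (a : A) (e f : Expr A) :
      ProvesC (act a (plus e f)) (plus (act a e) (act a f))
  | act_inter (a : A) (e f : Expr A) :
      ProvesC (act a (inter e f)) (inter (act a e) (act a f))
  -- partition axioms
  | act_disjoint {a b : A} (e f : Expr A) : a ≠ b →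
      ProvesC (inter (act a e) (act b f)) (zero A)
  | top_partition :
      ProvesC (top A)
        (listSum (((Finset.univ : Finset A).toList).map (fun a => act a (top A))))
  -- μX e is a least prefixed point of X ↦ e(X)
  | mu_prefix (e : Expr A) :
      ProvesC (plus (subst0 (mu e) e) (mu e)) (mu e)
  | mu_ind {e f : Expr A} :
      ProvesC (plus (subst0 f e) f) f → ProvesC (plus (mu e) f) f
  -- νX e is a greatest postfixed point of X ↦ e(X)
  | nu_postfix (e : Expr A) :
      ProvesC (plus (nu e) (subst0 (nu e) e)) (subst0 (nu e) e)
  | nu_coind {e f : Expr A} :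
      ProvesC (plus f (subst0 f e)) (subst0 f e) → ProvesC (plus f (nu e)) (nu e)
  -- the complementation schema, for closed expressions
  | compl_top {e : Expr A} : e.Closed →
      ProvesC (plus (top A) (plus e (compl e))) (plus e (compl e))
  | compl_bot {e : Expr A} : e.Closed →
      ProvesC (plus (inter e (compl e)) (zero A)) (zero A)

end RLLPaper

namespace RLLPaper

open Expr

/-!
Modulo provable equality the expressions form a bounded distributive lattice. If `c` is a complement
of `μX e(X)` and `⊤ ≤ e(μX e) + f(c)`, then `e(μX e) ≤ μX e` gives `⊤ ≤ μX e + f(c)`; meeting with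
`c` yields `c ≤ f(c)`, so `c ≤ νY f(Y)` by coinduction, and `⊤ ≤ μX e + c ≤ μX e + νY f`.
The second duality is the order dual, run with a complement of `νY f(Y)` and induction for `μX e`.
-/

section

variable {A : Type} [Fintype A] [DecidableEq A]

/-- Provable equality as a setoid; it is the congruence defining the Lindenbaum algebra. -/
def provableSetoid (A : Type) [Fintype A] [DecidableEq A] : Setoid (Expr A) :=
  ⟨ProvesC, .refl, .symm, .trans⟩

/-- The Lindenbaum algebra of the theory: expressions, open ones included, modulo provable
equality. It turns derivations in the theory into computations in a bounded distributive lattice. -/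
def Lindenbaum (A : Type) [Fintype A] [DecidableEq A] : Type :=
  Quotient (provableSetoid A)

namespace Lindenbaum

/-- The class of an expression modulo provable equality. -/
def mk (e : Expr A) : Lindenbaum A := Quotient.mk (provableSetoid A) e

theorem mk_eq_mk {e f : Expr A} : mk e = mk f ↔ ProvesC e f := Quotient.eq

instance : Max (Lindenbaum A) :=
  ⟨Quotient.map₂ plus fun _ _ he _ _ hf => ProvesC.plus_congr he hf⟩

instance : Min (Lindenbaum A) :=
  ⟨Quotient.map₂ inter fun _ _ he _ _ hf => ProvesC.inter_congr he hf⟩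

instance : Lattice (Lindenbaum A) :=
  Lattice.mk'
    (by rintro ⟨e⟩ ⟨f⟩; exact mk_eq_mk.2 (.plus_comm e f))
    (by rintro ⟨e⟩ ⟨f⟩ ⟨g⟩; exact mk_eq_mk.2 (.symm (.plus_assoc e f g)))
    (by rintro ⟨e⟩ ⟨f⟩; exact mk_eq_mk.2 (.inter_comm e f))
    (by rintro ⟨e⟩ ⟨f⟩ ⟨g⟩; exact mk_eq_mk.2 (.symm (.inter_assoc e f g)))
    (by rintro ⟨e⟩ ⟨f⟩; exact mk_eq_mk.2 (.plus_absorb e f))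
    (by rintro ⟨e⟩ ⟨f⟩; exact mk_eq_mk.2 (.inter_absorb e f))

theorem mk_le_mk {e f : Expr A} : mk e ≤ mk f ↔ ProvesC (plus e f) f :=
  sup_eq_right.symm.trans mk_eq_mk

instance : DistribLattice (Lindenbaum A) where
  le_sup_inf := by
    rintro ⟨e⟩ ⟨f⟩ ⟨g⟩
    exact (mk_eq_mk.2 (.plus_distrib e f g)).ge

instance : BoundedOrder (Lindenbaum A) where
  top := mk (top A)
  le_top := by
    rintro ⟨e⟩
    exact inf_eq_left.1 (mk_eq_mk.2 (.inter_top e))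
  bot := mk (zero A)
  bot_le := by
    rintro ⟨e⟩
    exact sup_eq_left.1 (mk_eq_mk.2 (.plus_zero e))

theorem codisjoint_mk {e f : Expr A} :
    Codisjoint (mk e) (mk f) ↔ ProvesC (plus (top A) (plus e f)) (plus e f) :=
  codisjoint_iff_le_sup.trans mk_le_mk

theorem disjoint_mk {e f : Expr A} :
    Disjoint (mk e) (mk f) ↔ ProvesC (plus (inter e f) (zero A)) (zero A) :=
  disjoint_iff_inf_le.trans mk_le_mk

theorem isCompl_mk_compl {e : Expr A} (he : e.Closed) : IsCompl (mk e) (mk e.compl) :=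
  ⟨disjoint_mk.2 (.compl_bot he), codisjoint_mk.2 (.compl_top he)⟩

theorem mk_subst0_mu_le (e : Expr A) : mk (subst0 (mu e) e) ≤ mk (mu e) :=
  mk_le_mk.2 (.mu_prefix e)

theorem mk_mu_le {e f : Expr A} (h : mk (subst0 f e) ≤ mk f) : mk (mu e) ≤ mk f :=
  mk_le_mk.2 (.mu_ind (mk_le_mk.1 h))

theorem mk_nu_le_subst0 (e : Expr A) : mk (nu e) ≤ mk (subst0 (nu e) e) :=
  mk_le_mk.2 (.nu_postfix e)

theorem le_mk_nu {e f : Expr A} (h : mk f ≤ mk (subst0 f e)) : mk f ≤ mk (nu e) :=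
  mk_le_mk.2 (.nu_coind (mk_le_mk.1 h))

theorem codisjoint_mk_mu_mk_nu {e f c : Expr A} (hc : IsCompl (mk (mu e)) (mk c))
    (h : Codisjoint (mk (subst0 (mu e) e)) (mk (subst0 c f))) :
    Codisjoint (mk (mu e)) (mk (nu f)) :=
  have c_postfixed : mk c ≤ mk (subst0 c f) :=
    hc.disjoint.symm.le_of_codisjoint (h.mono_left (mk_subst0_mu_le e))
  hc.codisjoint.mono_right (le_mk_nu c_postfixed)

theorem disjoint_mk_mu_mk_nu {e f c : Expr A} (hc : IsCompl (mk c) (mk (nu f)))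
    (h : Disjoint (mk (subst0 c e)) (mk (subst0 (nu f) f))) :
    Disjoint (mk (mu e)) (mk (nu f)) :=
  have c_prefixed : mk (subst0 c e) ≤ mk c :=
    (h.mono_right (mk_nu_le_subst0 f)).le_of_codisjoint hc.codisjoint.symm
  hc.disjoint.mono_left (mk_mu_le c_prefixed)

end Lindenbaum

open Lindenbaum in
theorem complement_schema_implies_duality_general (e f : Expr A) :
    ((mu e).Closed →
      ProvesC (plus (top A) (plus (subst0 (mu e) e) (subst0 (compl (mu e)) f)))
        (plus (subst0 (mu e) e) (subst0 (compl (mu e)) f)) →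
      ProvesC (plus (top A) (plus (mu e) (nu f))) (plus (mu e) (nu f))) ∧
    ((nu f).Closed →
      ProvesC (plus (inter (subst0 (compl (nu f)) e) (subst0 (nu f) f)) (zero A)) (zero A) →
      ProvesC (plus (inter (mu e) (nu f)) (zero A)) (zero A)) := by
  simp only [← codisjoint_mk, ← disjoint_mk]
  exact ⟨fun he => codisjoint_mk_mu_mk_nu (isCompl_mk_compl he),
    fun hf => disjoint_mk_mu_mk_nu (isCompl_mk_compl hf).symm⟩

end

/-- The quantifier-free complementation schema implies the
duality axioms: in the theory `ProvesC` (base axioms plus the complementation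
schema `⊤ ≤ e + eᶜ`, `e ∩ eᶜ ≤ 0` for closed `e`), both μ-ν duality schemas
are derivable: for `e(X)` and `f(Y)` (expressions whose only free variable is
the bound one), if `⊤ ≤ g + h` provably implies `⊤ ≤ e(g) + f(h)` for all
`g, h`, then `⊤ ≤ μX e(X) + νY f(Y)` is provable; and if `g ∩ h ≤ 0` provably
implies `e(g) ∩ f(h) ≤ 0` for all `g, h`, then `μX e(X) ∩ νY f(Y) ≤ 0` is
provable (`e ≤ f` abbreviates `e + f = f`). -/
theorem complement_schema_implies_duality {A : Type} [Fintype A] [DecidableEq A]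
    (e f : Expr A) (he : (Expr.mu e).Closed) (hf : (Expr.nu f).Closed) :
    ((∀ g h : Expr A,
        ProvesC (plus (top A) (plus g h)) (plus g h) →
        ProvesC (plus (top A) (plus (subst0 g e) (subst0 h f)))
          (plus (subst0 g e) (subst0 h f))) →
      ProvesC (plus (top A) (plus (mu e) (nu f))) (plus (mu e) (nu f))) ∧
    ((∀ g h : Expr A,
        ProvesC (plus (inter g h) (zero A)) (zero A) →
        ProvesC (plus (inter (subst0 g e) (subst0 h f)) (zero A)) (zero A)) →
      ProvesC (plus (inter (mu e) (nu f)) (zero A)) (zero A)) := by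
  have compl_inter_le : ProvesC (plus (inter (compl (nu f)) (nu f)) (zero A)) (zero A) :=
    Lindenbaum.disjoint_mk.1 (Lindenbaum.isCompl_mk_compl hf).symm.disjoint
  have ⟨plus_duality, inter_duality⟩ := complement_schema_implies_duality_general e f
  exact ⟨fun H => plus_duality he (H _ _ (.compl_top he)),
    fun H => inter_duality hf (H _ _ compl_inter_le)⟩

end RLLPaper
end

section
/- The Fischer-Ladner closure FL(e) of every RLL expression e is finite; in fact its size is linear in the size of e. The proof uses the identity FL(σX e) = {σX e} ∪ {f[σX e / X] : f ∈ FL(e)} for σ ∈ {μ, ν}. -/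
namespace RLLPaper

open Expr

/-- The Fischer-Ladner relation `→_FL` on RLL expressions: the smallest
relation with `a·e →_FL e`, `e₀⋆e₁ →_FL eᵢ` for `⋆ ∈ {+,∩}`, and
`σX e(X) →_FL e(σX e(X))` for `σ ∈ {μ,ν}`. -/
inductive FLStep {A : Type} : Expr A → Expr A → Prop
  | act (a : A) (e : Expr A) : FLStep (Expr.act a e) e
  | plus_left (e f : Expr A) : FLStep (Expr.plus e f) e
  | plus_right (e f : Expr A) : FLStep (Expr.plus e f) f
  | inter_left (e f : Expr A) : FLStep (Expr.inter e f) e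
  | inter_right (e f : Expr A) : FLStep (Expr.inter e f) f
  | mu (e : Expr A) : FLStep (Expr.mu e) (subst0 (Expr.mu e) e)
  | nu (e : Expr A) : FLStep (Expr.nu e) (subst0 (Expr.nu e) e)

/-- The Fischer-Ladner closure `FL(e) = {f | f ≤_FL e}`, where `≤_FL` is the
reflexive-transitive closure of `→_FL`. -/
def FL {A : Type} (e : Expr A) : Set (Expr A) :=
  {f | Relation.ReflTransGen FLStep e f}

/-- The size (number of constructors) of an RLL expression. -/
def Expr.size {A : Type} : Expr A → ℕ
  | .var _ => 1
  | .act _ e => Expr.size e + 1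
  | .plus e f => Expr.size e + Expr.size f + 1
  | .inter e f => Expr.size e + Expr.size f + 1
  | .mu e => Expr.size e + 1
  | .nu e => Expr.size e + 1

/-!
Substitution commutes with `→_FL` except at variables, so `FL` can be computed by recursion on the
expression: a constructor contributes itself and the closures of its arguments, and a fixpoint
satisfies `FL(σX e) = {σX e} ∪ {f[σX e / X] : f ∈ FL(e)}`. For the inclusion `⊆`, the right-hand
side is closed under `→_FL`: the only image where a new step can appear is `X[σX e / X] = σX e`,
whose unfolding `e[σX e / X]` is again in the image. As an image is no larger than its source, each
constructor adds at most one element.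
-/

namespace Expr

variable {A : Type} (r s : ℕ → ℕ) (σ τ : ℕ → Expr A) (e : Expr A)

/-- The lifting of a renaming under a binder: index `0` is the variable just bound, and every other
index is shifted. It names the function that `rename` builds in its `mu` and `nu` clauses. -/
def liftRename : ℕ → ℕ
  | 0 => 0
  | m + 1 => r m + 1

/-- The lifting of a substitution under a binder: index `0` is the variable just bound, and the
other values are weakened to avoid capturing it. It names the function that `msubst` builds in its
`mu` and `nu` clauses. -/
def liftSubst : ℕ → Expr A
  | 0 => var 0
  | m + 1 => rename (· + 1) (τ m)

theorem rename_mu : rename r (mu e) = mu (rename (liftRename r) e) := rfl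

theorem rename_nu : rename r (nu e) = nu (rename (liftRename r) e) := rfl

theorem msubst_mu : msubst τ (mu e) = mu (msubst (liftSubst τ) e) := rfl

theorem msubst_nu : msubst τ (nu e) = nu (msubst (liftSubst τ) e) := rfl

theorem liftRename_comp_liftRename : liftRename r ∘ liftRename s = liftRename (r ∘ s) := by
  funext n
  cases n <;> rfl

theorem rename_rename : rename r (rename s e) = rename (r ∘ s) e := by
  induction e generalizing r s with
  | var n => rfl
  | act a e ih => simp only [rename, ih]
  | plus e f ihe ihf | inter e f ihe ihf => simp only [rename, ihe, ihf]
  | mu e ih | nu e ih => simp only [rename_mu, rename_nu, ih, liftRename_comp_liftRename]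

theorem liftSubst_comp_liftRename : liftSubst τ ∘ liftRename s = liftSubst (τ ∘ s) := by
  funext n
  cases n <;> rfl

theorem msubst_rename : msubst τ (rename s e) = msubst (τ ∘ s) e := by
  induction e generalizing τ s with
  | var n => rfl
  | act a e ih => simp only [rename, msubst, ih]
  | plus e f ihe ihf | inter e f ihe ihf => simp only [rename, msubst, ihe, ihf]
  | mu e ih | nu e ih =>
    simp only [rename_mu, rename_nu, msubst_mu, msubst_nu, ih, liftSubst_comp_liftRename]

theorem rename_liftRename_comp_liftSubst :
    rename (liftRename r) ∘ liftSubst τ = liftSubst (rename r ∘ τ) := by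
  funext n
  cases n with
  | zero => rfl
  | succ m =>
    calc rename (liftRename r) (rename (· + 1) (τ m))
      _ = rename ((· + 1) ∘ r) (τ m) := rename_rename _ _ _
      _ = rename (· + 1) (rename r (τ m)) := (rename_rename _ _ _).symm

theorem rename_msubst : rename r (msubst τ e) = msubst (rename r ∘ τ) e := by
  induction e generalizing r τ with
  | var n => rfl
  | act a e ih => simp only [rename, msubst, ih]
  | plus e f ihe ihf | inter e f ihe ihf => simp only [rename, msubst, ihe, ihf]
  | mu e ih | nu e ih =>
    simp only [rename_mu, rename_nu, msubst_mu, msubst_nu, ih, rename_liftRename_comp_liftSubst]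

theorem msubst_liftSubst_comp_liftSubst :
    msubst (liftSubst σ) ∘ liftSubst τ = liftSubst (msubst σ ∘ τ) := by
  funext n
  cases n with
  | zero => rfl
  | succ m =>
    calc msubst (liftSubst σ) (rename (· + 1) (τ m))
      _ = msubst (rename (· + 1) ∘ σ) (τ m) := msubst_rename _ _ _
      _ = rename (· + 1) (msubst σ (τ m)) := (rename_msubst _ _ _).symm

theorem msubst_msubst : msubst σ (msubst τ e) = msubst (msubst σ ∘ τ) e := by
  induction e generalizing σ τ with
  | var n => rfl
  | act a e ih => simp only [msubst, ih]
  | plus e f ihe ihf | inter e f ihe ihf => simp only [msubst, ihe, ihf]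
  | mu e ih | nu e ih => simp only [msubst_mu, msubst_nu, ih, msubst_liftSubst_comp_liftSubst]

theorem liftSubst_var : liftSubst (var : ℕ → Expr A) = var := by
  funext n
  cases n <;> rfl

theorem msubst_var : msubst var e = e := by
  induction e with
  | var n => rfl
  | act a e ih => simp only [msubst, ih]
  | plus e f ihe ihf | inter e f ihe ihf => simp only [msubst, ihe, ihf]
  | mu e ih | nu e ih => simp only [msubst_mu, msubst_nu, liftSubst_var, ih]

theorem subst0_rename_succ (g : Expr A) : subst0 g (rename (· + 1) e) = e :=
  (msubst_rename _ _ e).trans (msubst_var e)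

theorem msubst_subst0 (g : Expr A) :
    msubst τ (subst0 g e) = subst0 (msubst τ g) (msubst (liftSubst τ) e) := by
  simp only [subst0, msubst_msubst]
  congr 1
  funext n
  cases n with
  | zero => rfl
  | succ m => exact (subst0_rename_succ (τ m) (msubst τ g)).symm

end Expr

section FischerLadner

variable {A : Type} {a : A} {n : ℕ} {e f g : Expr A}

theorem not_flStep_var : ¬ FLStep (var n) g := nofun

theorem flStep_act_iff : FLStep (act a e) g ↔ g = e :=
  ⟨fun h => by cases h; rfl, fun h => h ▸ .act a e⟩

theorem flStep_plus_iff : FLStep (plus e f) g ↔ g = e ∨ g = f :=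
  ⟨fun h => by cases h <;> simp, by rintro (rfl | rfl) <;> constructor⟩

theorem flStep_inter_iff : FLStep (inter e f) g ↔ g = e ∨ g = f :=
  ⟨fun h => by cases h <;> simp, by rintro (rfl | rfl) <;> constructor⟩

theorem flStep_mu_iff : FLStep (mu e) g ↔ g = subst0 (mu e) e :=
  ⟨fun h => by cases h; rfl, fun h => h ▸ .mu e⟩

theorem flStep_nu_iff : FLStep (nu e) g ↔ g = subst0 (nu e) e :=
  ⟨fun h => by cases h; rfl, fun h => h ▸ .nu e⟩

theorem flStep_msubst_iff (τ : ℕ → Expr A) (hf : ∀ n, f ≠ var n) :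
    FLStep (msubst τ f) g ↔ ∃ g', FLStep f g' ∧ g = msubst τ g' := by
  cases f with
  | var n => exact absurd rfl (hf n)
  | act a e => simp only [msubst, flStep_act_iff, exists_eq_left]
  | plus e f | inter e f =>
    simp only [msubst, flStep_plus_iff, flStep_inter_iff, or_and_right, exists_or,
      exists_eq_left]
  | mu e | nu e =>
    simp only [msubst_mu, msubst_nu, flStep_mu_iff, flStep_nu_iff, exists_eq_left,
      msubst_subst0]

theorem FLStep.msubst (τ : ℕ → Expr A) (h : FLStep f g) :
    FLStep (msubst τ f) (msubst τ g) :=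
  (flStep_msubst_iff τ fun _ hf => not_flStep_var (hf ▸ h)).2 ⟨g, h, rfl⟩

theorem self_mem_FL (e : Expr A) : e ∈ FL e := .refl

theorem msubst_mem_FL (τ : ℕ → Expr A) (h : f ∈ FL e) : msubst τ f ∈ FL (msubst τ e) :=
  Relation.ReflTransGen.lift (msubst τ) (fun _ _ => FLStep.msubst τ) _ _ h

theorem FL_subset_of_flStep_closed {S : Set (Expr A)} (he : e ∈ S)
    (hS : ∀ f ∈ S, ∀ g, FLStep f g → g ∈ S) : FL e ⊆ S := by
  intro f hf
  induction hf with
  | refl => exact he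
  | tail _ hstep ih => exact hS _ ih _ hstep

theorem FL_eq_insert_iUnion (e : Expr A) : FL e = insert e (⋃ (g) (_ : FLStep e g), FL g) := by
  ext f
  simp only [FL, Set.mem_insert_iff, Set.mem_iUnion, Set.mem_ofPred_eq, exists_prop]
  rw [Relation.ReflTransGen.cases_head_iff, eq_comm]

theorem FL_var (n : ℕ) : FL (var n : Expr A) = {var n} := by
  simp [FL_eq_insert_iUnion (var n), not_flStep_var]

theorem FL_act (a : A) (e : Expr A) : FL (act a e) = insert (act a e) (FL e) := by
  simp [FL_eq_insert_iUnion (act a e), flStep_act_iff]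

theorem FL_plus (e f : Expr A) : FL (plus e f) = insert (plus e f) (FL e ∪ FL f) := by
  simp [FL_eq_insert_iUnion (plus e f), flStep_plus_iff, Set.iUnion_or, Set.iUnion_union_distrib]

theorem FL_inter (e f : Expr A) : FL (inter e f) = insert (inter e f) (FL e ∪ FL f) := by
  simp [FL_eq_insert_iUnion (inter e f), flStep_inter_iff, Set.iUnion_or,
    Set.iUnion_union_distrib]

theorem FL_eq_insert_image_subst0 {s : Expr A} (hs : ∀ g, FLStep s g ↔ g = subst0 s e) :
    FL s = insert s (subst0 s '' FL e) := by
  have unfold_mem : subst0 s e ∈ subst0 s '' FL e := Set.mem_image_of_mem _ (self_mem_FL e)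
  apply Set.Subset.antisymm
  · refine FL_subset_of_flStep_closed (Set.mem_insert _ _) fun f hf g hfg => Or.inr ?_
    rcases hf with rfl | ⟨f, hf, rfl⟩
    · rwa [(hs g).1 hfg]
    · by_cases hvar : ∃ n, f = var n
      · obtain ⟨_ | m, rfl⟩ := hvar
        · rwa [(hs g).1 hfg]
        · exact absurd hfg not_flStep_var
      · obtain ⟨g', hfg', rfl⟩ := (flStep_msubst_iff _ (not_exists.1 hvar)).1 hfg
        exact Set.mem_image_of_mem _ (hf.tail hfg')
  · refine Set.insert_subset (self_mem_FL s) ?_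
    rintro _ ⟨f, hf, rfl⟩
    exact .head ((hs _).2 rfl) (msubst_mem_FL _ hf)

theorem FL_mu (e : Expr A) : FL (mu e) = insert (mu e) (subst0 (mu e) '' FL e) :=
  FL_eq_insert_image_subst0 fun _ => flStep_mu_iff

theorem FL_nu (e : Expr A) : FL (nu e) = insert (nu e) (subst0 (nu e) '' FL e) :=
  FL_eq_insert_image_subst0 fun _ => flStep_nu_iff

end FischerLadner

/-- The Fischer-Ladner closure of every RLL expression is
finite; in fact its cardinality is (bounded linearly by, indeed at most) the
size of the expression. -/
theorem FL_finite_linear {A : Type} (e : Expr A) :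
    (FL e).Finite ∧ (FL e).ncard ≤ Expr.size e := by
  rw [← Set.encard_le_coe_iff_finite_ncard_le]
  induction e with
  | var n => simp [FL_var, Expr.size]
  | act a e ih =>
    grw [FL_act, Set.encard_insert_le, ih]
    rfl
  | plus e f ihe ihf | inter e f ihe ihf =>
    simp only [FL_plus, FL_inter]
    grw [Set.encard_insert_le, Set.encard_union_le, ihe, ihf]
    rfl
  | mu e ih | nu e ih =>
    simp only [FL_mu, FL_nu]
    grw [Set.encard_insert_le, Set.encard_image_le, ih]
    rfl

end RLLPaper
end

section
/- Incompleteness via the Cantor topology: in the Cantor topology on A^ω (where a set is open iff it is a union of basic cylinders u·A^ω for finite words u), if A ⊆ A^ω is open and A ⊆ aA := {aσ | σ ∈ A} for a letter a, then A = ∅. Consequently, the greatest open postfixed point of the operator A ↦ aA is the empty set, whereas its greatest postfixed point among all subsets of A^ω is {a^ω} (assuming |A| ≥ 2), which is nonempty. -/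
/-!
Peeling off one letter at a time, every word of a postfixed point of `S ↦ aS` is `a^ω`, so the
postfixed points are exactly `∅` and `{a^ω}`. The second is not open, because the Cantor space over
an alphabet with at least two letters has no isolated points: a cylinder `u·A^ω` contains `u·b^ω`
for every letter `b`.
-/

namespace RLLPaper

/-- A subset of `A^ω` is open in the Cantor topology iff it is a union of
basic cylinders `u·A^ω` for finite words `u`. -/
def IsOpenC {A : Type} (S : Set (Stream' A)) : Prop :=
  ∃ U : Set (List A), S = ⋃ u ∈ U, Set.range (Stream'.appendStream' u)

theorem subset_cons_image_iff {A : Type*} {a : A} {S : Set (Stream' A)} :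
    S ⊆ Stream'.cons a '' S ↔ S ⊆ {Stream'.const a} := by
  constructor
  · intro hS s hs
    have bisim : Stream'.IsBisimulation fun s t ↦ s ∈ S ∧ t = Stream'.const a := by
      rintro s _ ⟨hs, rfl⟩
      obtain ⟨t, ht, rfl⟩ := hS hs
      exact ⟨rfl, ht, Stream'.tail_const a⟩
    exact Stream'.eq_of_bisim _ bisim ⟨hs, rfl⟩
  · intro hS s hs
    obtain rfl : s = Stream'.const a := hS hs
    exact ⟨_, hs, (Stream'.const_eq a).symm⟩

theorem sUnion_subset_cons_image {A : Type*} (a : A) :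
    ⋃₀ {S : Set (Stream' A) | S ⊆ Stream'.cons a '' S} = {Stream'.const a} := by
  simp only [subset_cons_image_iff]
  exact isLUB_Iic.sSup_eq

theorem range_appendStream'_nontrivial {A : Type*} [Nontrivial A] (u : List A) :
    (Set.range (Stream'.appendStream' u)).Nontrivial := by
  obtain ⟨b, c, hbc⟩ := exists_pair_ne A
  refine ⟨_, ⟨Stream'.const b, rfl⟩, _, ⟨Stream'.const c, rfl⟩, fun h ↦ hbc ?_⟩
  exact congrArg Stream'.head (Stream'.append_right_injective u _ _ h)

theorem IsOpenC.nontrivial {A : Type} [Nontrivial A] {S : Set (Stream' A)} (hS : IsOpenC S)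
    (hne : S.Nonempty) : S.Nontrivial := by
  obtain ⟨U, rfl⟩ := hS
  obtain ⟨s, hs⟩ := hne
  obtain ⟨u, hu, -⟩ := Set.mem_iUnion₂.mp hs
  exact (range_appendStream'_nontrivial u).mono (Set.subset_iUnion₂_of_subset u hu subset_rfl)

theorem IsOpenC.eq_empty_of_subset_cons_image {A : Type} [Nontrivial A] {a : A}
    {S : Set (Stream' A)} (hS : IsOpenC S) (h : S ⊆ Stream'.cons a '' S) : S = ∅ := by
  by_contra hne
  exact (hS.nontrivial (Set.nonempty_iff_ne_empty.mpr hne)).not_subset_singleton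
    (subset_cons_image_iff.mp h)

theorem cantor_incompleteness_general {A : Type} [Nontrivial A] (a : A) :
    (∀ S : Set (Stream' A), IsOpenC S → S ⊆ Stream'.cons a '' S → S = ∅) ∧
    (⋃₀ {S : Set (Stream' A) | IsOpenC S ∧ S ⊆ Stream'.cons a '' S} = ∅) ∧
    (⋃₀ {S : Set (Stream' A) | S ⊆ Stream'.cons a '' S} = {Stream'.const a}) ∧
    ({Stream'.const a} : Set (Stream' A)).Nonempty :=
  ⟨fun _ ↦ IsOpenC.eq_empty_of_subset_cons_image,
    Set.sUnion_eq_empty.mpr fun _ hS ↦ hS.1.eq_empty_of_subset_cons_image hS.2,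
    sUnion_subset_cons_image a,
    Set.singleton_nonempty _⟩

/-- Incompleteness via the Cantor topology: over a finite
alphabet with at least two letters, (1) if `S ⊆ A^ω` is open and
`S ⊆ aS := {aσ | σ ∈ S}`, then `S = ∅`; consequently (2) the greatest open
postfixed point of `S ↦ aS` is the empty set, whereas (3) its greatest
postfixed point among all subsets of `A^ω` is `{a^ω}`, which is (4) nonempty. -/
theorem cantor_incompleteness {A : Type} [Fintype A] [Nontrivial A] (a : A) :
    (∀ S : Set (Stream' A), IsOpenC S → S ⊆ Stream'.cons a '' S → S = ∅) ∧
    (⋃₀ {S : Set (Stream' A) | IsOpenC S ∧ S ⊆ Stream'.cons a '' S} = ∅) ∧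
    (⋃₀ {S : Set (Stream' A) | S ⊆ Stream'.cons a '' S} = {Stream'.const a}) ∧
    ({Stream'.const a} : Set (Stream' A)).Nonempty :=
  cantor_incompleteness_general a

end RLLPaper
end

section
/- Soundness of the μ-ν duality principle in the powerset lattice: let S be a set and let e, f : P(S) → P(S) be monotone operators on the powerset lattice of S. (1) If for all X, Y ⊆ S, X ∪ Y = S implies e(X) ∪ f(Y) = S, then lfp(e) ∪ gfp(f) = S. (2) Dually, if for all X, Y ⊆ S, X ∩ Y = ∅ implies e(X) ∩ f(Y) = ∅, then lfp(e) ∩ gfp(f) = ∅. -/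
/-!
Both parts are fixed point induction on one complementary pair; no transfinite iteration is needed.
Let `y = gfp f`. Since `yᶜ` and `y` are disjoint, so are `e yᶜ` and `f y = y`, that is, `e yᶜ ≤ yᶜ`.
Hence `lfp e ≤ yᶜ`, which says that `lfp e` and `y` are disjoint. The codisjoint case is the order
dual, run from the complement of `lfp e`.
-/

section Frame

variable {α : Type*} [Order.Frame α] {e f : α →o α}

theorem disjoint_lfp_of_disjoint_map_compl {y : α} (h : Disjoint (e yᶜ) y) :
    Disjoint e.lfp y :=
  le_compl_iff_disjoint_right.mp (e.lfp_le (le_compl_iff_disjoint_right.mpr h))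

theorem disjoint_lfp_gfp (h : ∀ x y, Disjoint x y → Disjoint (e x) (f y)) :
    Disjoint e.lfp f.gfp := by
  have h_compl : Disjoint (e f.gfpᶜ) (f f.gfp) := h _ _ disjoint_compl_left
  rw [f.map_gfp] at h_compl
  exact disjoint_lfp_of_disjoint_map_compl h_compl

end Frame

section Coframe

variable {α : Type*} [Order.Coframe α] {e f : α →o α}

theorem codisjoint_gfp_of_codisjoint_map_hnot {x : α} (h : Codisjoint x (f (￢x))) :
    Codisjoint x f.gfp :=
  hnot_le_iff_codisjoint_right.mp (f.le_gfp (hnot_le_iff_codisjoint_right.mpr h))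

theorem codisjoint_lfp_gfp (h : ∀ x y, Codisjoint x y → Codisjoint (e x) (f y)) :
    Codisjoint e.lfp f.gfp := by
  have h_hnot : Codisjoint (e e.lfp) (f (￢e.lfp)) := h _ _ codisjoint_hnot_right
  rw [e.map_lfp] at h_hnot
  exact codisjoint_gfp_of_codisjoint_map_hnot h_hnot

end Coframe

theorem duality_sound_powerset_general {α : Type*} [CompleteDistribLattice α] (e f : α →o α) :
    ((∀ x y, Codisjoint x y → Codisjoint (e x) (f y)) → Codisjoint e.lfp f.gfp) ∧
    ((∀ x y, Disjoint x y → Disjoint (e x) (f y)) → Disjoint e.lfp f.gfp) :=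
  ⟨codisjoint_lfp_gfp, disjoint_lfp_gfp⟩

/-- Soundness of the μ-ν duality principle in the powerset
lattice: let `e, f : P(S) → P(S)` be monotone operators.
(1) If `X ∪ Y = S` implies `e(X) ∪ f(Y) = S` for all `X, Y ⊆ S`, then
`lfp(e) ∪ gfp(f) = S`.  (2) Dually, if `X ∩ Y = ∅` implies `e(X) ∩ f(Y) = ∅`
for all `X, Y ⊆ S`, then `lfp(e) ∩ gfp(f) = ∅`. -/
theorem duality_sound_powerset {S : Type*} (e f : Set S → Set S)
    (he : Monotone e) (hf : Monotone f) :
    ((∀ X Y : Set S, X ∪ Y = Set.univ → e X ∪ f Y = Set.univ) →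
      OrderHom.lfp ⟨e, he⟩ ∪ OrderHom.gfp ⟨f, hf⟩ = Set.univ) ∧
    ((∀ X Y : Set S, X ∩ Y = ∅ → e X ∩ f Y = ∅) →
      OrderHom.lfp ⟨e, he⟩ ∩ OrderHom.gfp ⟨f, hf⟩ = ∅) := by
  simpa only [codisjoint_iff, disjoint_iff, Set.sup_eq_union, Set.inf_eq_inter, Set.top_eq_univ,
    Set.bot_eq_empty, OrderHom.coe_mk] using duality_sound_powerset_general ⟨e, he⟩ ⟨f, hf⟩
end

section
/- The min-max duality property of the unit interval model: let f, g : [0,1] → [0,1] be monotone (non-decreasing) functions, and set α := inf {x ∈ [0,1] | f(x) ≤ x} and β := sup {x ∈ [0,1] | x ≤ g(x)}. If for all x, y ∈ [0,1], max(x,y) ≥ 1 implies max(f(x), g(y)) ≥ 1, then max(f(α), g(β)) ≥ 1. -/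
section PrefixedPoints

variable {L : Type*} [ConditionallyCompleteLattice L] {a b : L} {f : L → L}

lemma sInf_prefixedPoints_mem_Icc (hab : a ≤ b) (hfb : f b ≤ b) :
    sInf {x | x ∈ Set.Icc a b ∧ f x ≤ x} ∈ Set.Icc a b := by
  have b_mem : b ∈ {x | x ∈ Set.Icc a b ∧ f x ≤ x} := ⟨Set.right_mem_Icc.2 hab, hfb⟩
  exact ⟨le_csInf ⟨b, b_mem⟩ fun _ hx ↦ hx.1.1, csInf_le ⟨a, fun _ hx ↦ hx.1.1⟩ b_mem⟩

lemma map_left_le_map_sInf_prefixedPoints (hab : a ≤ b) (hf : MonotoneOn f (Set.Icc a b))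
    (hfb : f b ≤ b) : f a ≤ f (sInf {x | x ∈ Set.Icc a b ∧ f x ≤ x}) :=
  have inf_mem := sInf_prefixedPoints_mem_Icc hab hfb
  hf (Set.left_mem_Icc.2 hab) inf_mem inf_mem.1

end PrefixedPoints

lemma isGreatest_postfixedPoints_right {L : Type*} [Preorder L] {a b : L} {g : L → L}
    (hab : a ≤ b) (hgb : b ≤ g b) : IsGreatest {x | x ∈ Set.Icc a b ∧ x ≤ g x} b :=
  ⟨⟨Set.right_mem_Icc.2 hab, hgb⟩, fun _ hx ↦ hx.1.2⟩

theorem minmax_duality_general {L : Type*} [ConditionallyCompleteLinearOrder L] {a b : L}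
    {f g : L → L} (hab : a ≤ b) (hf : MonotoneOn f (Set.Icc a b)) (hfb : f b ≤ b)
    (h : b ≤ max (f a) (g b)) :
    b ≤ max (f (sInf {x | x ∈ Set.Icc a b ∧ f x ≤ x}))
      (g (sSup {x | x ∈ Set.Icc a b ∧ x ≤ g x})) := by
  rcases le_max_iff.1 h with hfa | hgb
  · exact le_max_of_le_left (hfa.trans (map_left_le_map_sInf_prefixedPoints hab hf hfb))
  · rw [(isGreatest_postfixedPoints_right hab hgb).csSup_eq]
    exact le_max_of_le_right hgb

/-- Min-max duality in the unit interval model: let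
`f, g : [0,1] → [0,1]` be monotone (non-decreasing) functions, and set
`α := inf {x ∈ [0,1] | f x ≤ x}` and `β := sup {x ∈ [0,1] | x ≤ g x}`.
If for all `x, y ∈ [0,1]`, `max x y ≥ 1` implies `max (f x) (g y) ≥ 1`, then
`max (f α) (g β) ≥ 1`. -/
theorem minmax_duality (f g : ℝ → ℝ)
    (hf : MonotoneOn f (Set.Icc 0 1)) (hg : MonotoneOn g (Set.Icc 0 1))
    (hfr : Set.MapsTo f (Set.Icc 0 1) (Set.Icc 0 1))
    (hgr : Set.MapsTo g (Set.Icc 0 1) (Set.Icc 0 1))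
    (h : ∀ x ∈ Set.Icc (0:ℝ) 1, ∀ y ∈ Set.Icc (0:ℝ) 1,
      1 ≤ max x y → 1 ≤ max (f x) (g y)) :
    1 ≤ max (f (sInf {x : ℝ | x ∈ Set.Icc (0:ℝ) 1 ∧ f x ≤ x}))
          (g (sSup {x : ℝ | x ∈ Set.Icc (0:ℝ) 1 ∧ x ≤ g x})) :=
  minmax_duality_general zero_le_one hf (hfr unitInterval.one_mem).2
    (h 0 unitInterval.zero_mem 1 unitInterval.one_mem (le_max_right 0 1))
end
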